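/- Let W be an m×k random matrix distributed according to the SUO distribution, let φ : ℝ → ℝ satisfy ‖φ‖_∞ ≤ C and ‖φ'‖_∞ ≤ C, and let z, z' ∈ ℝ^k satisfy ‖z‖² = ‖z'‖² = k. Then for n = max(k, m) ≥ 2, |E[κ_f(z, z')] − κ̃_f(Σ_{z,z'})| ≤ 4√2 √m C²/(n−1). -/

import Mathlib

open MeasureTheory ProbabilityTheory Matrix Kronecker
open scoped ENNReal NNReal

noncomputable section

instance {m n : Type*} : MeasurableSpace (Matrix m n ℝ) :=
  show MeasurableSpace (m → n → ℝ) from inferInstance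

/-- `μ` is the Haar probability measure on the group `O(n)` of `n × n` real orthogonal
matrices: it is a probability measure, it is supported on orthogonal matrices, and it is
invariant under (left) translation by any orthogonal matrix. -/
def IsHaarO (n : ℕ) (μ : Measure (Matrix (Fin n) (Fin n) ℝ)) : Prop :=
  IsProbabilityMeasure μ ∧
  (∀ᵐ M ∂μ, Mᵀ * M = 1) ∧
  ∀ Q : Matrix (Fin n) (Fin n) ℝ, Qᵀ * Q = 1 → μ.map (fun M => Q * M) = μ

/-- `μ` is the Haar probability measure on `SO(n)`: a probability measure supported on
orthogonal matrices of determinant one, invariant under left translation by `SO(n)`. -/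
def IsHaarSO (n : ℕ) (μ : Measure (Matrix (Fin n) (Fin n) ℝ)) : Prop :=
  IsProbabilityMeasure μ ∧
  (∀ᵐ M ∂μ, Mᵀ * M = 1 ∧ M.det = 1) ∧
  ∀ Q : Matrix (Fin n) (Fin n) ℝ, Qᵀ * Q = 1 → Q.det = 1 →
    μ.map (fun M => Q * M) = μ

/-- The map taking an `n × n` matrix to `√(n/k)` times its top-left `m × k` submatrix. -/
def suoOfHaar {m k n : ℕ} (hm : m ≤ n) (hk : k ≤ n)
    (M : Matrix (Fin n) (Fin n) ℝ) : Matrix (Fin m) (Fin k) ℝ :=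
  Real.sqrt ((n : ℝ) / (k : ℝ)) • M.submatrix (Fin.castLE hm) (Fin.castLE hk)

/-- `ν` is the scaled-corrected uniform orthogonal (SUO) distribution on `m × k` matrices:
the law of `√(n/k) • W₀` where `n = max k m` and `W₀` is the top-left `m × k` submatrix of
a Haar-distributed `n × n` orthogonal matrix. -/
def IsSUO (m k : ℕ) (ν : Measure (Matrix (Fin m) (Fin k) ℝ)) : Prop :=
  ∃ μ : Measure (Matrix (Fin (max k m)) (Fin (max k m)) ℝ),
    IsHaarO (max k m) μ ∧
    ν = μ.map (suoOfHaar (le_max_right k m) (le_max_left k m))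

/-- The kernel function `κ_f(z, z') = (1/m) f(z)ᵀ f(z')` of the combined layer
`f(z) = φ(W z)`, with `φ` applied elementwise. -/
def kernelF {m k : ℕ} (φ : ℝ → ℝ) (W : Matrix (Fin m) (Fin k) ℝ)
    (z z' : Fin k → ℝ) : ℝ :=
  (∑ i, φ (W.mulVec z i) * φ (W.mulVec z' i)) / (m : ℝ)

/-- The input covariance matrix `Σ_{z,z'} = (1/k) [[zᵀz, zᵀz'], [z'ᵀz, z'ᵀz']]`. -/
def covMat {k : ℕ} (z z' : Fin k → ℝ) : Matrix (Fin 2) (Fin 2) ℝ :=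
  (k : ℝ)⁻¹ • !![z ⬝ᵥ z, z ⬝ᵥ z'; z' ⬝ᵥ z, z' ⬝ᵥ z']

/-- The approximate kernel function `κ̃_f(Σ) = E_{u ∼ N(0, Σ)}[φ(u₁) φ(u₂)]`, realized by
pushing a pair of independent standard Gaussians through the Cholesky factor of `Σ`. -/
def approxKernel (φ : ℝ → ℝ) (S : Matrix (Fin 2) (Fin 2) ℝ) : ℝ :=
  ∫ p : ℝ × ℝ,
      φ (Real.sqrt (S 0 0) * p.1) *
      φ ((S 1 0 / Real.sqrt (S 0 0)) * p.1 +
          Real.sqrt (S 1 1 - (S 1 0) ^ 2 / S 0 0) * p.2)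
    ∂((gaussianReal 0 1).prod (gaussianReal 0 1))

/-- `γ` is the law of a centered (jointly) Gaussian random vector indexed by `ι` with
covariance matrix `A`: every linear functional of it is a centered real Gaussian with the
corresponding variance. -/
def IsGaussianLaw {ι : Type*} [Fintype ι] (A : Matrix ι ι ℝ)
    (γ : Measure (ι → ℝ)) : Prop :=
  IsProbabilityMeasure γ ∧
  ∀ l : ι → ℝ,
    γ.map (fun y => ∑ i, l i * y i) =
      gaussianReal 0 (Real.toNNReal (∑ i, ∑ j, l i * A i j * l j))

/-- The Frobenius (Hilbert–Schmidt) norm of a matrix. -/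
def frobNorm {m n : ℕ} (M : Matrix (Fin m) (Fin n) ℝ) : ℝ :=
  Real.sqrt (∑ i, ∑ j, (M i j) ^ 2)

/-- The `ℓ²` operator norm of a square matrix. -/
def opNorm {d : ℕ} (A : Matrix (Fin d) (Fin d) ℝ) : ℝ :=
  ‖Matrix.toEuclideanCLM (𝕜 := ℝ) A‖

end

/-!
Every row of a Haar orthogonal matrix is uniform on the unit sphere of `ℝⁿ`. Padding `z / √k` and
`z' / √k` with zeros to unit vectors `x`, `y` of `ℝⁿ`, the mean kernel is therefore
`E[φ(√n ⟪x, u⟫) φ(√n ⟪y, u⟫)]` with `u` uniform on the sphere, and only the projection of `√n u` to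
a plane containing `x` and `y` enters. This projection has a uniform angle and an independent
radius, while by Box–Muller a planar standard Gaussian has a uniform angle and an independent
Rayleigh radius `R`.

For `n = N + 2` the projected radius exceeds `s` with probability `(1 - s² / n) ^ (N / 2)`, and `R`
exceeds `r` with probability `exp (-r² / 2)`. Hence the projected radius has the law of `T(R)` for
`T(r)² = n (1 - exp (-r² / N))`. Coupling the two planar laws through the same angle and the same
`R` moves the product of the two values of `φ` by at most `C² √2 E|T(R) - R|` on average, and
`E|T(R) - R| ≤ 5 / (2N)`. For `n ≤ 3` the bound follows from `|φ| ≤ C` alone.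
-/

noncomputable section

/-! ### Rayleigh law and polar coordinates -/

/-- The Rayleigh law: the distribution of the norm of a standard Gaussian vector in the plane. -/
def rayleighMeasure : Measure ℝ :=
  (volume.restrict (Set.Ioi 0)).withDensity fun r ↦ ENNReal.ofReal (r * Real.exp (-r ^ 2 / 2))

lemma ae_pos_rayleighMeasure : ∀ᵐ r ∂rayleighMeasure, 0 < r :=
  (withDensity_absolutelyContinuous _ _).ae_le (ae_restrict_mem measurableSet_Ioi)

lemma integrableOn_mul_exp_neg_sq_div_two (c : ℝ) :
    IntegrableOn (fun r ↦ r * Real.exp (-r ^ 2 / 2)) (Set.Ioi c) := by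
  convert (integrable_mul_exp_neg_mul_sq (b := 1 / 2) (by norm_num)).integrableOn using 2 with r
  rw [neg_div, neg_mul, one_div_mul_eq_div]

lemma integral_Ioi_mul_exp_neg_sq_div_two (c : ℝ) :
    ∫ r in Set.Ioi c, r * Real.exp (-r ^ 2 / 2) = Real.exp (-c ^ 2 / 2) := by
  have hderiv (r : ℝ) :
      HasDerivAt (fun r ↦ -Real.exp (-r ^ 2 / 2)) (r * Real.exp (-r ^ 2 / 2)) r := by
    refine (((hasDerivAt_pow 2 r).fun_neg.div_const 2).exp).fun_neg.congr_deriv ?_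
    push_cast
    ring
  have hlim : Filter.Tendsto (fun r : ℝ ↦ -Real.exp (-r ^ 2 / 2)) Filter.atTop (nhds 0) := by
    rw [← neg_zero]
    refine (Real.tendsto_exp_atBot.comp ?_).neg
    exact (Filter.tendsto_neg_atTop_atBot.comp
      (Filter.tendsto_pow_atTop two_ne_zero)).atBot_div_const two_pos
  rw [integral_Ioi_of_hasDerivAt_of_tendsto' (fun r _ ↦ hderiv r)
    (integrableOn_mul_exp_neg_sq_div_two c) hlim, zero_sub, neg_neg]

lemma rayleighMeasure_Ioi {c : ℝ} (hc : 0 ≤ c) :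
    rayleighMeasure (Set.Ioi c) = ENNReal.ofReal (Real.exp (-c ^ 2 / 2)) := by
  rw [rayleighMeasure, withDensity_apply _ measurableSet_Ioi,
    Measure.restrict_restrict measurableSet_Ioi, Set.Ioi_inter_Ioi, sup_of_le_left hc,
    ← integral_Ioi_mul_exp_neg_sq_div_two,
    ofReal_integral_eq_lintegral_ofReal (integrableOn_mul_exp_neg_sq_div_two c)]
  filter_upwards [ae_restrict_mem measurableSet_Ioi] with r hr
  exact mul_nonneg (hc.trans (le_of_lt hr)) (Real.exp_pos _).le

instance : IsProbabilityMeasure rayleighMeasure where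
  measure_univ := by
    rw [← measure_congr (Filter.eventuallyEq_univ.2 ae_pos_rayleighMeasure)]
    exact (rayleighMeasure_Ioi le_rfl).trans (by simp)

section Moments

variable {q : ℝ}

lemma rayleigh_density_smul_rpow {r : ℝ} (hr : 0 < r) :
    (ENNReal.ofReal (r * Real.exp (-r ^ 2 / 2))).toReal • r ^ q =
      r ^ (q + 1) * Real.exp (-(1 / 2) * r ^ 2) := by
  rw [ENNReal.toReal_ofReal (by positivity), Real.rpow_add_one hr.ne', smul_eq_mul]
  ring_nf

lemma integrable_rpow_rayleighMeasure (hq : -2 < q) :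
    Integrable (fun r ↦ r ^ q) rayleighMeasure := by
  rw [rayleighMeasure, integrable_withDensity_iff_integrable_smul₀' (by fun_prop) (by simp)]
  refine (integrableOn_rpow_mul_exp_neg_mul_sq (b := 1 / 2) (s := q + 1) (by norm_num)
    (by linarith)).congr_fun (fun r hr ↦ ?_) measurableSet_Ioi
  exact (rayleigh_density_smul_rpow hr).symm

lemma integral_rpow_rayleighMeasure (hq : -2 < q) :
    ∫ r, r ^ q ∂rayleighMeasure = 2 ^ (q / 2) * Real.Gamma (q / 2 + 1) := by
  rw [rayleighMeasure, integral_withDensity_eq_integral_toReal_smul (by fun_prop) (by simp),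
    setIntegral_congr_fun measurableSet_Ioi fun r hr ↦ rayleigh_density_smul_rpow hr]
  have h := integral_rpow_mul_exp_neg_mul_rpow (p := 2) (q := q + 1) (b := 1 / 2)
    two_pos (by linarith) (by norm_num)
  simp only [Real.rpow_two] at h
  rw [h, one_div, Real.inv_rpow zero_le_two, ← Real.rpow_neg zero_le_two,
    show -(-(q + 1 + 1) / 2) = q / 2 + 1 by ring, show (q + 1 + 1) / 2 = q / 2 + 1 by ring,
    Real.rpow_add_one two_ne_zero]
  ring

end Moments

lemma integrable_pow_rayleighMeasure (p : ℕ) : Integrable (fun r ↦ r ^ p) rayleighMeasure := by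
  simpa only [Real.rpow_natCast] using
    integrable_rpow_rayleighMeasure (q := p) (by linarith [p.cast_nonneg (α := ℝ)])

lemma integral_pow_two_mul_rayleighMeasure (p : ℕ) :
    ∫ r, r ^ (2 * p) ∂rayleighMeasure = 2 ^ p * p.factorial := by
  have h := integral_rpow_rayleighMeasure (q := (2 * p : ℕ))
    (by linarith [(2 * p).cast_nonneg (α := ℝ)])
  simp only [Real.rpow_natCast] at h
  rw [h, Nat.cast_mul, Nat.cast_ofNat, mul_div_cancel_left₀ _ two_ne_zero, Real.rpow_natCast,
    Real.Gamma_nat_eq_factorial]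

/-- The uniform law of an angle, on the interval of angles used by `polarCoord`. -/
def uniformAngle : Measure ℝ := cond volume (Set.Ioo (-Real.pi) Real.pi)

instance : IsProbabilityMeasure uniformAngle :=
  cond_isProbabilityMeasure_of_finite (by simp [Real.pi_pos]) (by simp)

lemma integral_uniformAngle (f : ℝ → ℝ) :
    ∫ θ, f θ ∂uniformAngle = (2 * Real.pi)⁻¹ * ∫ θ in -Real.pi..Real.pi, f θ := by
  rw [uniformAngle, ProbabilityTheory.cond, integral_smul_measure, Real.volume_Ioo,
    intervalIntegral.integral_of_le (by linarith [Real.pi_pos]), integral_Ioc_eq_integral_Ioo,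
    ENNReal.toReal_inv, ENNReal.toReal_ofReal (by linarith [Real.pi_pos]), smul_eq_mul]
  ring_nf

/-- Polar coordinates to Cartesian coordinates, in the order `(angle, radius)`. -/
def polarMap (p : ℝ × ℝ) : ℝ × ℝ := (p.2 * Real.cos p.1, p.2 * Real.sin p.1)

@[fun_prop]
lemma continuous_polarMap : Continuous polarMap := by unfold polarMap; fun_prop

lemma polarMap_fst_sq_add_snd_sq (p : ℝ × ℝ) :
    (polarMap p).1 ^ 2 + (polarMap p).2 ^ 2 = p.2 ^ 2 := by
  simp only [polarMap]
  linear_combination p.2 ^ 2 * Real.cos_sq_add_sin_sq p.1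

lemma gaussianPDF_mul_gaussianPDF_polarMap (p : ℝ × ℝ) :
    gaussianPDF 0 1 (polarMap p).1 * gaussianPDF 0 1 (polarMap p).2 =
      ENNReal.ofReal ((2 * Real.pi)⁻¹ * Real.exp (-p.2 ^ 2 / 2)) := by
  simp only [gaussianPDF, gaussianPDFReal, NNReal.coe_one, mul_one, sub_zero]
  rw [← ENNReal.ofReal_mul (by positivity), mul_mul_mul_comm, ← mul_inv,
    Real.mul_self_sqrt (by positivity), ← Real.exp_add, ← add_div, ← neg_add,
    polarMap_fst_sq_add_snd_sq]

lemma map_polarMap_uniformAngle_prod_rayleighMeasure :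
    (uniformAngle.prod rayleighMeasure).map polarMap =
      (gaussianReal 0 1).prod (gaussianReal 0 1) := by
  refine Measure.ext_of_lintegral _ fun f hf ↦ ?_
  rw [lintegral_map hf (by fun_prop), gaussianReal_of_var_ne_zero _ one_ne_zero,
    prod_withDensity (by fun_prop) (by fun_prop),
    lintegral_withDensity_eq_lintegral_mul _ (by fun_prop) hf, ← Measure.volume_eq_prod,
    ← lintegral_comp_polarCoord_symm, ← lintegral_prod_swap, rayleighMeasure, uniformAngle,
    ProbabilityTheory.cond, ← withDensity_const, prod_withDensity (by fun_prop) (by fun_prop),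
    Measure.prod_restrict,
    lintegral_withDensity_eq_lintegral_mul _ (by fun_prop) (by fun_prop)]
  refine setLIntegral_congr_fun (measurableSet_Ioi.prod measurableSet_Ioo) fun p hp ↦ ?_
  have hr : 0 < p.1 := hp.1
  have hsymm : polarCoord.symm p = polarMap p.swap := rfl
  have hvol : (volume (Set.Ioo (-Real.pi) Real.pi))⁻¹ = ENNReal.ofReal (2 * Real.pi)⁻¹ := by
    rw [Real.volume_Ioo, ENNReal.ofReal_inv_of_pos (by positivity)]
    ring_nf
  simp only [Pi.mul_apply, hsymm, hvol, gaussianPDF_mul_gaussianPDF_polarMap, smul_eq_mul,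
    Prod.snd_swap, ← mul_assoc]
  congr 1
  rw [← ENNReal.ofReal_mul (by positivity), ← ENNReal.ofReal_mul (by positivity)]
  ring_nf

/-! ### Radius of the projection of a uniform point of a sphere to a plane -/

lemma eq_of_ae_pos_of_Ioi_eq {μ ν : Measure ℝ} [IsProbabilityMeasure μ] [IsProbabilityMeasure ν]
    (hμ : ∀ᵐ x ∂μ, 0 < x) (hν : ∀ᵐ x ∂ν, 0 < x)
    (h : ∀ s, 0 < s → μ (Set.Ioi s) = ν (Set.Ioi s)) : μ = ν := by
  refine Measure.ext_of_Iic _ _ fun s ↦ ?_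
  have prob_Ioi {κ : Measure ℝ} [IsProbabilityMeasure κ] (hκ : ∀ᵐ x ∂κ, 0 < x) (hs : s ≤ 0) :
      κ (Set.Ioi s) = 1 :=
    (prob_compl_eq_zero_iff measurableSet_Ioi).1
      (measure_mono_null (Set.compl_subset_compl.2 fun _ hx ↦ hs.trans_lt hx) hκ)
  rw [← Set.compl_Ioi, prob_compl_eq_one_sub measurableSet_Ioi,
    prob_compl_eq_one_sub measurableSet_Ioi]
  congr 1
  rcases lt_or_ge 0 s with hs | hs
  · exact h s hs
  · rw [prob_Ioi hμ hs, prob_Ioi hν hs]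

/-- The increasing function `T` which transports the Rayleigh law to the law of the length of the
orthogonal projection to a plane of a uniform point of the sphere of radius `√(N + 2)` in dimension
`N + 2`; it is obtained by equating the tails of the two laws. -/
def planarRadius (N : ℕ) (r : ℝ) : ℝ := √((N + 2) * (1 - Real.exp (-r ^ 2 / N)))

/-- The length of the planar part of a vector after rescaling the vector to length `√(N + 2)`, as a
function of the length of its planar part and of its other `N` coordinates. -/
def rescaledPlanarRadius (N : ℕ) (q : ℝ × (Fin N → ℝ)) : ℝ :=
  √((N + 2) : ℝ) * q.1 / √(q.1 ^ 2 + ∑ j, q.2 j ^ 2)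

@[fun_prop]
lemma measurable_planarRadius (N : ℕ) : Measurable (planarRadius N) := by
  unfold planarRadius; fun_prop

@[fun_prop]
lemma measurable_rescaledPlanarRadius (N : ℕ) : Measurable (rescaledPlanarRadius N) := by
  unfold rescaledPlanarRadius; fun_prop

lemma planarRadius_le (N : ℕ) (r : ℝ) : planarRadius N r ≤ √(N + 2) :=
  Real.sqrt_le_sqrt (mul_le_of_le_one_right (by positivity) (sub_le_self _ (Real.exp_pos _).le))

lemma planarRadius_pos {N : ℕ} (hN : N ≠ 0) {r : ℝ} (hr : 0 < r) : 0 < planarRadius N r := by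
  have hexp : Real.exp (-r ^ 2 / N) < 1 := by
    rw [Real.exp_lt_one_iff, neg_div, neg_lt_zero]
    positivity
  exact Real.sqrt_pos.2 (mul_pos (by positivity) (sub_pos.2 hexp))

lemma rescaledPlanarRadius_le (N : ℕ) (q : ℝ × (Fin N → ℝ)) :
    rescaledPlanarRadius N q ≤ √(N + 2) := by
  rw [rescaledPlanarRadius, mul_div_assoc]
  exact mul_le_of_le_one_right (Real.sqrt_nonneg _)
    (div_le_one_of_le₀ (Real.le_sqrt_of_sq_le (le_add_of_nonneg_right (by positivity)))
      (Real.sqrt_nonneg _))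

lemma integral_exp_neg_mul_sq_div_two_gaussianReal {l : ℝ} (hl : -1 < l) :
    ∫ x, Real.exp (-(l * x ^ 2) / 2) ∂gaussianReal 0 1 = √(1 + l)⁻¹ := by
  have hdensity (x : ℝ) : gaussianPDFReal 0 1 x • Real.exp (-(l * x ^ 2) / 2) =
      (√(2 * Real.pi))⁻¹ * Real.exp (-((1 + l) / 2) * x ^ 2) := by
    simp only [gaussianPDFReal, NNReal.coe_one, mul_one, sub_zero, smul_eq_mul, mul_assoc,
      ← Real.exp_add]
    ring_nf
  simp_rw [integral_gaussianReal_eq_integral_smul one_ne_zero, hdensity]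
  have hl' : 0 < 1 + l := by linarith
  rw [integral_const_mul, integral_gaussian, ← Real.sqrt_inv, ← Real.sqrt_mul (by positivity)]
  congr 1
  field_simp

lemma lt_planarRadius_iff {N : ℕ} (hN : N ≠ 0) {s r : ℝ} (hs : 0 < s) (hsN : s ^ 2 < N + 2)
    (hr : 0 < r) :
    s < planarRadius N r ↔ √(-N * Real.log (1 - s ^ 2 / (N + 2))) < r := by
  have hN' : (0 : ℝ) < N := by positivity
  have hpos : 0 < 1 - s ^ 2 / (N + 2) := by rw [sub_pos, div_lt_one (by positivity)]; exact hsN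
  rw [planarRadius, Real.lt_sqrt hs.le, Real.sqrt_lt' hr, ← div_lt_iff₀' (by positivity),
    lt_sub_comm, ← Real.lt_log_iff_exp_lt hpos, div_lt_iff₀ hN', neg_lt, ← neg_mul, neg_mul_comm,
    mul_comm]

lemma rayleighMeasure_planarRadius_gt {N : ℕ} (hN : N ≠ 0) {s : ℝ} (hs : 0 < s) :
    rayleighMeasure {r | s < planarRadius N r} = ENNReal.ofReal (√(1 - s ^ 2 / (N + 2)) ^ N) := by
  rcases lt_or_ge (s ^ 2) (N + 2) with hsN | hsN
  · have hpos : 0 < 1 - s ^ 2 / (N + 2) := by rw [sub_pos, div_lt_one (by positivity)]; exact hsN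
    have hlog : 0 ≤ -N * Real.log (1 - s ^ 2 / (N + 2)) :=
      mul_nonneg_of_nonpos_of_nonpos (by simp)
        (Real.log_nonpos hpos.le (sub_le_self _ (by positivity)))
    calc rayleighMeasure {r | s < planarRadius N r}
        = rayleighMeasure (Set.Ioi √(-N * Real.log (1 - s ^ 2 / (N + 2)))) := by
          refine measure_congr ?_
          filter_upwards [ae_pos_rayleighMeasure] with r hr
          exact propext (lt_planarRadius_iff hN hs hsN hr)
      _ = ENNReal.ofReal (√(1 - s ^ 2 / (N + 2)) ^ N) := by
          rw [rayleighMeasure_Ioi (Real.sqrt_nonneg _), Real.sq_sqrt hlog, neg_mul, neg_neg,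
            mul_div_assoc, Real.exp_nat_mul, Real.exp_half, Real.exp_log hpos]
  · have hempty : {r | s < planarRadius N r} = ∅ :=
      Set.eq_empty_of_forall_notMem fun r hr ↦
        (planarRadius_le N r).not_gt ((Real.sqrt_le_iff.2 ⟨hs.le, hsN⟩).trans_lt hr)
    have hzero : 1 - s ^ 2 / (N + 2) ≤ 0 := by rwa [sub_nonpos, one_le_div (by positivity)]
    rw [hempty, measure_empty, Real.sqrt_eq_zero_of_nonpos hzero, zero_pow hN, ENNReal.ofReal_zero]

lemma lt_rescaledPlanarRadius_iff {N : ℕ} {s r : ℝ} (hs : 0 < s) (hsN : s ^ 2 < N + 2) (hr : 0 < r)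
    (g : Fin N → ℝ) :
    s < rescaledPlanarRadius N (r, g) ↔ √(s ^ 2 / (N + 2 - s ^ 2) * ∑ j, g j ^ 2) < r := by
  have hpos : 0 < N + 2 - s ^ 2 := sub_pos.2 hsN
  rw [rescaledPlanarRadius, ← Real.sqrt_sq hr.le, ← Real.sqrt_mul (by positivity),
    ← Real.sqrt_div (by positivity), Real.lt_sqrt hs.le, Real.sqrt_lt_sqrt_iff (by positivity),
    Real.sqrt_sq hr.le, lt_div_iff₀ (by positivity), div_mul_eq_mul_div, div_lt_iff₀ hpos]
  constructor <;> intro h <;> linarith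

lemma rayleighMeasure_rescaledPlanarRadius_gt {N : ℕ} {s : ℝ} (hs : 0 < s) (hsN : s ^ 2 < N + 2)
    (g : Fin N → ℝ) :
    rayleighMeasure {r | s < rescaledPlanarRadius N (r, g)} =
      ENNReal.ofReal (∏ j, Real.exp (-(s ^ 2 / (N + 2 - s ^ 2) * g j ^ 2) / 2)) := by
  have hl : 0 ≤ s ^ 2 / (N + 2 - s ^ 2) := div_nonneg (sq_nonneg s) (sub_pos.2 hsN).le
  calc rayleighMeasure {r | s < rescaledPlanarRadius N (r, g)}
      = rayleighMeasure (Set.Ioi √(s ^ 2 / (N + 2 - s ^ 2) * ∑ j, g j ^ 2)) := by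
        refine measure_congr ?_
        filter_upwards [ae_pos_rayleighMeasure] with r hr
        exact propext (lt_rescaledPlanarRadius_iff hs hsN hr g)
    _ = ENNReal.ofReal (∏ j, Real.exp (-(s ^ 2 / (N + 2 - s ^ 2) * g j ^ 2) / 2)) := by
        rw [rayleighMeasure_Ioi (Real.sqrt_nonneg _), Real.sq_sqrt (mul_nonneg hl (by positivity)),
          ← Real.exp_sum, ← Finset.sum_div, Finset.sum_neg_distrib, Finset.mul_sum]

lemma integrable_prod_exp_neg_mul_sq_div_two {ι : Type*} [Fintype ι] (μ : Measure (ι → ℝ))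
    [IsFiniteMeasure μ] {l : ℝ} (hl : 0 ≤ l) :
    Integrable (fun g ↦ ∏ j, Real.exp (-(l * g j ^ 2) / 2)) μ := by
  refine .of_bound (Measurable.aestronglyMeasurable (by fun_prop)) 1 (.of_forall fun g ↦ ?_)
  rw [Real.norm_of_nonneg (by positivity), ← Real.exp_sum, Real.exp_le_one_iff]
  refine Finset.sum_nonpos fun j _ ↦ ?_
  rw [neg_div, neg_nonpos]
  positivity

lemma rayleighMeasure_prod_pi_rescaledPlanarRadius_gt {N : ℕ} (hN : N ≠ 0) {s : ℝ} (hs : 0 < s) :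
    (rayleighMeasure.prod (Measure.pi fun _ : Fin N ↦ gaussianReal 0 1))
      {q | s < rescaledPlanarRadius N q} = ENNReal.ofReal (√(1 - s ^ 2 / (N + 2)) ^ N) := by
  rcases lt_or_ge (s ^ 2) (N + 2) with hsN | hsN
  · have hpos : 0 < N + 2 - s ^ 2 := sub_pos.2 hsN
    have hl : 0 ≤ s ^ 2 / (N + 2 - s ^ 2) := div_nonneg (sq_nonneg s) hpos.le
    have hfactor : (1 + s ^ 2 / (N + 2 - s ^ 2))⁻¹ = 1 - s ^ 2 / (N + 2) := by
      rw [one_add_div hpos.ne', sub_add_cancel, inv_div, sub_div, div_self (by positivity)]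
    rw [Measure.prod_apply_symm (measurableSet_lt measurable_const (by fun_prop))]
    calc ∫⁻ g, rayleighMeasure {r | s < rescaledPlanarRadius N (r, g)}
          ∂(Measure.pi fun _ : Fin N ↦ gaussianReal 0 1)
        = ENNReal.ofReal (∫ g : Fin N → ℝ,
            ∏ j, Real.exp (-(s ^ 2 / (N + 2 - s ^ 2) * g j ^ 2) / 2)
            ∂Measure.pi fun _ ↦ gaussianReal 0 1) := by
          simp_rw [rayleighMeasure_rescaledPlanarRadius_gt hs hsN]
          exact (ofReal_integral_eq_lintegral_ofReal (integrable_prod_exp_neg_mul_sq_div_two _ hl)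
            (.of_forall fun g ↦ by positivity)).symm
      _ = ENNReal.ofReal (√(1 - s ^ 2 / (N + 2)) ^ N) := by
          rw [integral_fintype_prod_eq_pow
              fun x ↦ Real.exp (-(s ^ 2 / (N + 2 - s ^ 2) * x ^ 2) / 2),
            integral_exp_neg_mul_sq_div_two_gaussianReal (by linarith), hfactor, Fintype.card_fin]
  · have hempty : {q | s < rescaledPlanarRadius N q} = ∅ :=
      Set.eq_empty_of_forall_notMem fun q hq ↦
        (rescaledPlanarRadius_le N q).not_gt ((Real.sqrt_le_iff.2 ⟨hs.le, hsN⟩).trans_lt hq)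
    have hzero : 1 - s ^ 2 / (N + 2) ≤ 0 := by rwa [sub_nonpos, one_le_div (by positivity)]
    rw [hempty, measure_empty, Real.sqrt_eq_zero_of_nonpos hzero, zero_pow hN, ENNReal.ofReal_zero]

lemma map_rescaledPlanarRadius {N : ℕ} (hN : N ≠ 0) :
    (rayleighMeasure.prod (Measure.pi fun _ : Fin N ↦ gaussianReal 0 1)).map
      (rescaledPlanarRadius N) = rayleighMeasure.map (planarRadius N) := by
  have : IsProbabilityMeasure (rayleighMeasure.map (planarRadius N)) :=
    Measure.isProbabilityMeasure_map (by fun_prop)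
  have : IsProbabilityMeasure ((rayleighMeasure.prod
    (Measure.pi fun _ : Fin N ↦ gaussianReal 0 1)).map (rescaledPlanarRadius N)) :=
    Measure.isProbabilityMeasure_map (by fun_prop)
  refine eq_of_ae_pos_of_Ioi_eq ?_ ?_ fun s hs ↦ ?_
  · rw [ae_map_iff (by fun_prop) measurableSet_Ioi]
    filter_upwards [Measure.quasiMeasurePreserving_fst.ae ae_pos_rayleighMeasure] with q hq
    unfold rescaledPlanarRadius
    positivity
  · rw [ae_map_iff (by fun_prop) measurableSet_Ioi]
    filter_upwards [ae_pos_rayleighMeasure] with r hr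
    exact planarRadius_pos hN hr
  · rw [Measure.map_apply (by fun_prop) measurableSet_Ioi,
      Measure.map_apply (by fun_prop) measurableSet_Ioi]
    exact (rayleighMeasure_prod_pi_rescaledPlanarRadius_gt hN hs).trans
      (rayleighMeasure_planarRadius_gt hN hs).symm

/-! ### Transport cost of the coupling -/

lemma mul_exp_neg_half_le_one_sub_exp_neg {x : ℝ} (hx : 0 ≤ x) :
    x * Real.exp (-x / 2) ≤ 1 - Real.exp (-x) := by
  have hsinh : x / 2 ≤ (Real.exp (x / 2) - Real.exp (-(x / 2))) / 2 := by
    rw [← Real.sinh_eq]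
    exact Real.self_le_sinh_iff.2 (by linarith)
  calc x * Real.exp (-x / 2)
      ≤ (Real.exp (x / 2) - Real.exp (-(x / 2))) * Real.exp (-x / 2) := by gcongr; linarith
    _ = 1 - Real.exp (-x) := by
      rw [sub_mul, ← Real.exp_add, ← Real.exp_add, ← Real.exp_zero]
      ring_nf

section Coupling

variable {N : ℕ} {r : ℝ}

lemma planarRadius_le_mul (hN : N ≠ 0) (hr : 0 ≤ r) : planarRadius N r ≤ r * (1 + 1 / N) := by
  have hexp := Real.add_one_le_exp (-r ^ 2 / N)
  refine Real.sqrt_le_iff.2 ⟨by positivity, ?_⟩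
  calc (N + 2) * (1 - Real.exp (-r ^ 2 / N)) ≤ (N + 2) * (r ^ 2 / N) := by
        gcongr
        linarith [neg_div (N : ℝ) (r ^ 2)]
    _ ≤ (r * (1 + 1 / N)) ^ 2 := by
        have : (r * (1 + 1 / N)) ^ 2 - (N + 2) * (r ^ 2 / N) = (r / N) ^ 2 := by field_simp; ring
        linarith [sq_nonneg (r / N)]

lemma sub_le_planarRadius (hN : N ≠ 0) (hr : 0 ≤ r) : r - r ^ 3 / (4 * N) ≤ planarRadius N r := by
  have hN' : (0 : ℝ) < N := by positivity
  calc r - r ^ 3 / (4 * N) = r * (-(r ^ 2 / N / 4) + 1) := by field_simp; ring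
    _ ≤ r * Real.exp (-(r ^ 2 / N / 4)) := by gcongr; exact Real.add_one_le_exp _
    _ ≤ planarRadius N r := by
      refine Real.le_sqrt_of_sq_le ?_
      calc (r * Real.exp (-(r ^ 2 / N / 4))) ^ 2
          = N * (r ^ 2 / N * Real.exp (-(r ^ 2 / N) / 2)) := by
            rw [mul_pow, ← Real.exp_nat_mul, ← mul_assoc, mul_div_cancel₀ _ hN'.ne']
            ring_nf
        _ ≤ N * (1 - Real.exp (-(r ^ 2 / N))) := by
            gcongr; exact mul_exp_neg_half_le_one_sub_exp_neg (by positivity)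
        _ ≤ (N + 2) * (1 - Real.exp (-r ^ 2 / N)) := by
            rw [neg_div]
            gcongr
            · exact sub_nonneg.2 (Real.exp_le_one_iff.2 (neg_nonpos.2 (by positivity)))
            · linarith

lemma abs_planarRadius_sub_self_le (hN : N ≠ 0) (hr : 0 ≤ r) :
    |planarRadius N r - r| ≤ (1 / 2 + 3 / 4 * r ^ 2 + r ^ 4 / 16) / N := by
  -- AM–GM turns the odd powers of `r` into even ones, whose Rayleigh moments are rational.
  have hodd : r + r ^ 3 / 4 ≤ 1 / 2 + 3 / 4 * r ^ 2 + r ^ 4 / 16 := by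
    linarith [sq_nonneg (r - 1), sq_nonneg (r / 2 - r ^ 2 / 4)]
  refine le_trans ?_ (div_le_div_of_nonneg_right hodd N.cast_nonneg)
  rw [add_div, div_div, abs_sub_le_iff]
  constructor
  · calc planarRadius N r - r ≤ r * (1 + 1 / N) - r := by gcongr; exact planarRadius_le_mul hN hr
      _ = r / N := by ring
      _ ≤ r / N + r ^ 3 / (4 * N) := le_add_of_nonneg_right (by positivity)
  · calc r - planarRadius N r ≤ r ^ 3 / (4 * N) := by linarith [sub_le_planarRadius hN hr]
      _ ≤ r / N + r ^ 3 / (4 * N) := le_add_of_nonneg_left (by positivity)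

end Coupling

lemma integrable_planarRadius_sub_self (N : ℕ) :
    Integrable (fun r ↦ planarRadius N r - r) rayleighMeasure := by
  have hbdd : Integrable (planarRadius N) rayleighMeasure :=
    .of_bound (by fun_prop) √(N + 2) (.of_forall fun r ↦
      (Real.norm_of_nonneg (Real.sqrt_nonneg _)).trans_le (planarRadius_le N r))
  exact hbdd.sub (by simpa only [pow_one] using integrable_pow_rayleighMeasure 1)

lemma integral_abs_planarRadius_sub_self_le {N : ℕ} (hN : N ≠ 0) :
    ∫ r, |planarRadius N r - r| ∂rayleighMeasure ≤ 5 / 2 / N := by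
  have hquadratic : Integrable (fun r : ℝ ↦ 1 / 2 + 3 / 4 * r ^ 2) rayleighMeasure :=
    (integrable_const _).add ((integrable_pow_rayleighMeasure 2).const_mul _)
  have hfourth := (integrable_pow_rayleighMeasure 4).div_const 16
  calc ∫ r, |planarRadius N r - r| ∂rayleighMeasure
      ≤ ∫ r, (1 / 2 + 3 / 4 * r ^ 2 + r ^ 4 / 16) / N ∂rayleighMeasure := by
        refine integral_mono_ae (integrable_planarRadius_sub_self N).abs
          ((hquadratic.add hfourth).div_const _) ?_
        filter_upwards [ae_pos_rayleighMeasure] with r hr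
        exact abs_planarRadius_sub_self_le hN hr.le
    _ = 5 / 2 / N := by
        have hmoment_two := integral_pow_two_mul_rayleighMeasure 1
        have hmoment_four := integral_pow_two_mul_rayleighMeasure 2
        norm_num at hmoment_two hmoment_four
        rw [integral_div, integral_add hquadratic hfourth, integral_add (integrable_const _)
            ((integrable_pow_rayleighMeasure 2).const_mul _), integral_const_mul,
          integral_div (16 : ℝ), hmoment_two, hmoment_four]
        norm_num

lemma integral_sq_mul_cos_add_mul_sin_uniformAngle (ρ σ : ℝ) :
    ∫ θ, (ρ * Real.cos θ + σ * Real.sin θ) ^ 2 ∂uniformAngle = (ρ ^ 2 + σ ^ 2) / 2 := by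
  have hexpand (θ : ℝ) : (ρ * Real.cos θ + σ * Real.sin θ) ^ 2 =
      ρ ^ 2 * Real.cos θ ^ 2 + σ ^ 2 * Real.sin θ ^ 2
        + 2 * ρ * σ * (Real.sin θ * Real.cos θ) := by ring
  have hπ := Real.pi_ne_zero
  rw [integral_uniformAngle]
  simp_rw [hexpand]
  rw [intervalIntegral.integral_add (Continuous.intervalIntegrable (by fun_prop) _ _)
      (Continuous.intervalIntegrable (by fun_prop) _ _),
    intervalIntegral.integral_add (Continuous.intervalIntegrable (by fun_prop) _ _)
      (Continuous.intervalIntegrable (by fun_prop) _ _),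
    intervalIntegral.integral_const_mul, intervalIntegral.integral_const_mul,
    intervalIntegral.integral_const_mul, integral_cos_sq, integral_sin_sq, integral_sin_mul_cos₁]
  simp only [Real.sin_neg, Real.sin_pi, Real.cos_neg, Real.cos_pi]
  field_simp
  ring

lemma memLp_mul_cos_add_mul_sin_uniformAngle (ρ σ : ℝ) (p : ℝ≥0∞) :
    MemLp (fun θ ↦ ρ * Real.cos θ + σ * Real.sin θ) p uniformAngle := by
  refine .of_bound (Continuous.aestronglyMeasurable (by fun_prop)) (|ρ| + |σ|)
    (.of_forall fun θ ↦ (norm_add_le _ _).trans ?_)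
  rw [norm_mul, norm_mul]
  exact add_le_add (mul_le_of_le_one_right (norm_nonneg _) (Real.abs_cos_le_one θ))
    (mul_le_of_le_one_right (norm_nonneg _) (Real.abs_sin_le_one θ))

lemma integral_abs_le_sqrt_integral_sq {Ω : Type*} [MeasurableSpace Ω] {P : Measure Ω}
    [IsProbabilityMeasure P] {X : Ω → ℝ} (hX : MemLp X 2 P) :
    ∫ ω, |X ω| ∂P ≤ √(∫ ω, X ω ^ 2 ∂P) := by
  refine Real.le_sqrt_of_sq_le ?_
  have hvar := variance_eq_sub hX.abs
  simp only [Pi.pow_apply, Pi.abs_apply, sq_abs] at hvar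
  linarith [variance_nonneg |X| P]

lemma integral_abs_mul_cos_add_mul_sin_uniformAngle_le (ρ σ : ℝ) :
    ∫ θ, |ρ * Real.cos θ + σ * Real.sin θ| ∂uniformAngle ≤ √((ρ ^ 2 + σ ^ 2) / 2) := by
  rw [← integral_sq_mul_cos_add_mul_sin_uniformAngle]
  exact integral_abs_le_sqrt_integral_sq (memLp_mul_cos_add_mul_sin_uniformAngle ρ σ 2)

/-- The law of the orthogonal projection to a plane of a uniform point of the sphere of radius
`√(N + 2)` in dimension `N + 2`, see `map_inner_uniformSphere`. -/
def planarProjectionLaw (N : ℕ) : Measure (ℝ × ℝ) :=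
  (uniformAngle.prod rayleighMeasure).map fun q ↦ polarMap (q.1, planarRadius N q.2)

section ProductTest

variable {φ : ℝ → ℝ} {C L : ℝ≥0}

lemma abs_mul_le_sq (hφ : ∀ x, |φ x| ≤ C) (a b : ℝ) : |φ a * φ b| ≤ C ^ 2 := by
  rw [abs_mul, sq]
  exact mul_le_mul (hφ a) (hφ b) (abs_nonneg _) C.coe_nonneg

lemma integrable_mul_of_abs_le {Ω : Type*} [MeasurableSpace Ω] {P : Measure Ω} [IsFiniteMeasure P]
    (hφ : ∀ x, |φ x| ≤ C) (hφm : Measurable φ) {X Y : Ω → ℝ} (hX : Measurable X)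
    (hY : Measurable Y) : Integrable (fun ω ↦ φ (X ω) * φ (Y ω)) P :=
  .of_bound (by fun_prop) (C ^ 2) (.of_forall fun _ ↦ abs_mul_le_sq hφ _ _)

lemma abs_integral_mul_le_sq {Ω : Type*} [MeasurableSpace Ω] {P : Measure Ω}
    [IsProbabilityMeasure P] (hφ : ∀ x, |φ x| ≤ C) (X Y : Ω → ℝ) :
    |∫ ω, φ (X ω) * φ (Y ω) ∂P| ≤ C ^ 2 := by
  simpa only [Real.norm_eq_abs, probReal_univ, mul_one] using
    norm_integral_le_of_norm_le_const (μ := P) (f := fun ω ↦ φ (X ω) * φ (Y ω)) (C := C ^ 2)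
      (.of_forall fun _ ↦ abs_mul_le_sq hφ _ _)

lemma abs_mul_sub_mul_le (hφ : ∀ x, |φ x| ≤ C) (hL : LipschitzWith L φ) (a b a' b' : ℝ) :
    |φ a * φ b - φ a' * φ b'| ≤ C * L * (|a - a'| + |b - b'|) := by
  have hdist (x y : ℝ) : |φ x - φ y| ≤ L * |x - y| := hL.dist_le_mul x y
  calc |φ a * φ b - φ a' * φ b'| = |(φ a - φ a') * φ b + φ a' * (φ b - φ b')| := by ring_nf
    _ ≤ |φ a - φ a'| * |φ b| + |φ a'| * |φ b - φ b'| := by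
      simpa only [abs_mul] using abs_add_le ((φ a - φ a') * φ b) (φ a' * (φ b - φ b'))
    _ ≤ L * |a - a'| * C + C * (L * |b - b'|) := by gcongr <;> apply_rules
    _ = C * L * (|a - a'| + |b - b'|) := by ring

lemma abs_polarMap_product_sub_le (hφ : ∀ x, |φ x| ≤ C) (hL : LipschitzWith L φ)
    (ρ σ θ s r : ℝ) :
    |φ (polarMap (θ, s)).1 * φ (ρ * (polarMap (θ, s)).1 + σ * (polarMap (θ, s)).2)
        - φ (polarMap (θ, r)).1 * φ (ρ * (polarMap (θ, r)).1 + σ * (polarMap (θ, r)).2)| ≤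
      C * L * (|Real.cos θ| + |ρ * Real.cos θ + σ * Real.sin θ|) * |s - r| := by
  have hfst : (polarMap (θ, s)).1 - (polarMap (θ, r)).1 = Real.cos θ * (s - r) := by
    simp only [polarMap]
    ring
  have hsnd : ρ * (polarMap (θ, s)).1 + σ * (polarMap (θ, s)).2
      - (ρ * (polarMap (θ, r)).1 + σ * (polarMap (θ, r)).2) =
      (ρ * Real.cos θ + σ * Real.sin θ) * (s - r) := by
    simp only [polarMap]
    ring
  refine (abs_mul_sub_mul_le hφ hL _ _ _ _).trans_eq ?_
  rw [hfst, hsnd, abs_mul, abs_mul, ← add_mul, mul_assoc _ _ |s - r|]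

lemma abs_integral_planarProjectionLaw_sub_integral_gaussianReal_le {N : ℕ} (hN : N ≠ 0)
    (hφ : ∀ x, |φ x| ≤ C) (hL : LipschitzWith L φ) (ρ σ : ℝ) :
    |∫ p, φ p.1 * φ (ρ * p.1 + σ * p.2) ∂planarProjectionLaw N
        - ∫ p, φ p.1 * φ (ρ * p.1 + σ * p.2) ∂(gaussianReal 0 1).prod (gaussianReal 0 1)| ≤
      C * L * (√(1 / 2) + √((ρ ^ 2 + σ ^ 2) / 2)) * (5 / 2 / N) := by
  have hφm : Measurable φ := hL.continuous.measurable
  set A : ℝ → ℝ := fun θ ↦ |Real.cos θ| + |ρ * Real.cos θ + σ * Real.sin θ|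
  have hcos : MemLp Real.cos 1 uniformAngle := by
    simpa using memLp_mul_cos_add_mul_sin_uniformAngle 1 0 1
  have hlin := memLp_mul_cos_add_mul_sin_uniformAngle ρ σ 1
  rw [memLp_one_iff_integrable] at hcos hlin
  have hA : ∫ θ, A θ ∂uniformAngle ≤ √(1 / 2) + √((ρ ^ 2 + σ ^ 2) / 2) := by
    rw [integral_add hcos.abs hlin.abs]
    gcongr
    · simpa using integral_abs_mul_cos_add_mul_sin_uniformAngle_le 1 0
    · exact integral_abs_mul_cos_add_mul_sin_uniformAngle_le ρ σ
  have hbound : Integrable (fun q : ℝ × ℝ ↦ C * L * A q.1 * |planarRadius N q.2 - q.2|)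
      (uniformAngle.prod rayleighMeasure) :=
    ((hcos.abs.add hlin.abs).const_mul _).mul_prod (integrable_planarRadius_sub_self N).abs
  rw [planarProjectionLaw, ← map_polarMap_uniformAngle_prod_rayleighMeasure,
    integral_map (by fun_prop) (by fun_prop), integral_map (by fun_prop) (by fun_prop),
    ← integral_sub (integrable_mul_of_abs_le hφ hφm (by fun_prop) (by fun_prop))
      (integrable_mul_of_abs_le hφ hφm (by fun_prop) (by fun_prop)), ← Real.norm_eq_abs]
  calc _ ≤ ∫ q : ℝ × ℝ, C * L * A q.1 * |planarRadius N q.2 - q.2|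
        ∂uniformAngle.prod rayleighMeasure :=
        norm_integral_le_of_norm_le hbound
          (.of_forall fun q ↦ abs_polarMap_product_sub_le hφ hL ρ σ q.1 _ _)
    _ = C * L * (∫ θ, A θ ∂uniformAngle) * ∫ r, |planarRadius N r - r| ∂rayleighMeasure := by
        rw [integral_prod_mul (fun θ ↦ C * L * A θ) fun r ↦ |planarRadius N r - r|,
          integral_const_mul]
    _ ≤ C * L * (√(1 / 2) + √((ρ ^ 2 + σ ^ 2) / 2)) * (5 / 2 / N) := by
        gcongr
        exact integral_abs_planarRadius_sub_self_le hN

end ProductTest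

/-! ### Uniform law on the unit sphere -/

lemma map_rescale_prod_pi_gaussianReal {N : ℕ} (hN : N ≠ 0) :
    (((gaussianReal 0 1).prod (gaussianReal 0 1)).prod
        (Measure.pi fun _ : Fin N ↦ gaussianReal 0 1)).map
      (fun p ↦ (√(N + 2) / √(p.1.1 ^ 2 + p.1.2 ^ 2 + ∑ j, p.2 j ^ 2)) • p.1) =
      planarProjectionLaw N := by
  set π := Measure.pi fun _ : Fin N ↦ gaussianReal 0 1
  have hpolar : (fun p : (ℝ × ℝ) × (Fin N → ℝ) ↦
        (√(N + 2) / √(p.1.1 ^ 2 + p.1.2 ^ 2 + ∑ j, p.2 j ^ 2)) • p.1) ∘ Prod.map polarMap id =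
      (polarMap ∘ Prod.map id (rescaledPlanarRadius N)) ∘ MeasurableEquiv.prodAssoc := by
    funext ⟨p, x⟩
    change (√(N + 2) / √((polarMap p).1 ^ 2 + (polarMap p).2 ^ 2 + ∑ j, x j ^ 2)) • polarMap p =
      polarMap (p.1, rescaledPlanarRadius N (p.2, x))
    rw [polarMap_fst_sq_add_snd_sq]
    simp only [polarMap, rescaledPlanarRadius, Prod.smul_mk, smul_eq_mul, ← mul_assoc,
      div_mul_eq_mul_div]
  have hBoxMuller : MeasurePreserving (Prod.map polarMap id)
      ((uniformAngle.prod rayleighMeasure).prod π)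
      (((gaussianReal 0 1).prod (gaussianReal 0 1)).prod π) :=
    .prod ⟨by fun_prop, map_polarMap_uniformAngle_prod_rayleighMeasure⟩ (.id π)
  have hrescaled : MeasurePreserving (Prod.map id (rescaledPlanarRadius N))
      (uniformAngle.prod (rayleighMeasure.prod π))
      (uniformAngle.prod (rayleighMeasure.map (planarRadius N))) :=
    .prod (.id _) ⟨by fun_prop, map_rescaledPlanarRadius hN⟩
  have hradius : MeasurePreserving (Prod.map id (planarRadius N))
      (uniformAngle.prod rayleighMeasure)
      (uniformAngle.prod (rayleighMeasure.map (planarRadius N))) :=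
    .prod (.id _) (Measurable.measurePreserving (by fun_prop) _)
  rw [← hBoxMuller.map_eq, Measure.map_map (by fun_prop) (by fun_prop), hpolar,
    ← Measure.map_map (by fun_prop) (MeasurableEquiv.measurable _), Measure.prodAssoc_prod,
    ← Measure.map_map (by fun_prop) (by fun_prop), hrescaled.map_eq, ← hradius.map_eq,
    Measure.map_map (by fun_prop) (by fun_prop)]
  rfl

section OrthonormalBasis

variable {E : Type*} [NormedAddCommGroup E] [InnerProductSpace ℝ E]

lemma exists_norm_eq_one_and_eq_norm_smul [Nontrivial E] (w : E) :
    ∃ e : E, ‖e‖ = 1 ∧ w = ‖w‖ • e := by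
  rcases eq_or_ne w 0 with rfl | hw
  · obtain ⟨e, he⟩ := exists_norm_eq E zero_le_one
    exact ⟨e, he, by simp⟩
  · exact ⟨‖w‖⁻¹ • w, norm_smul_inv_norm (𝕜 := ℝ) hw, by simp [smul_smul, hw]⟩

lemma norm_sub_inner_smul {x y : E} (hx : ‖x‖ = 1) (hy : ‖y‖ = 1) :
    ‖y - inner ℝ x y • x‖ = √(1 - inner ℝ x y ^ 2) := by
  rw [← Real.sqrt_sq (norm_nonneg _), norm_sub_sq_real, norm_smul, Real.norm_eq_abs, mul_pow,
    sq_abs, inner_smul_right, real_inner_comm, hx, hy]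
  ring_nf

variable [FiniteDimensional ℝ E]

lemma exists_orthonormal_pair_decomposition (hE : 2 ≤ Module.finrank ℝ E) {x y : E}
    (hx : ‖x‖ = 1) (hy : ‖y‖ = 1) :
    ∃ e : E, Orthonormal ℝ ![x, e] ∧ y = inner ℝ x y • x + √(1 - inner ℝ x y ^ 2) • e := by
  have hx0 : x ≠ 0 := norm_ne_zero_iff.1 (by simp [hx])
  have : Nontrivial (ℝ ∙ x)ᗮ := by
    have hfinrank := Submodule.finrank_add_finrank_orthogonal (ℝ ∙ x)
    rw [finrank_span_singleton hx0] at hfinrank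
    exact Module.nontrivial_of_finrank_pos (R := ℝ) (by omega)
  have hw : y - inner ℝ x y • x ∈ (ℝ ∙ x)ᗮ := by
    rw [Submodule.mem_orthogonal_singleton_iff_inner_right, inner_sub_right, inner_smul_right,
      real_inner_self_eq_norm_sq, hx]
    ring
  obtain ⟨e, he, hwe⟩ := exists_norm_eq_one_and_eq_norm_smul (⟨_, hw⟩ : (ℝ ∙ x)ᗮ)
  have hxe : inner ℝ x (e : E) = 0 := Submodule.mem_orthogonal_singleton_iff_inner_right.1 e.2
  refine ⟨e, ?_, ?_⟩
  · simpa [orthonormal_vecCons_iff, hx, hxe] using he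
  · rw [← norm_sub_inner_smul hx hy, add_comm, ← sub_eq_iff_eq_add]
    exact congr_arg Subtype.val hwe

lemma exists_orthonormalBasis_inl_eq {ι κ : Type*} [Fintype ι] [Fintype κ] {v : ι → E}
    (hv : Orthonormal ℝ v) (hE : Module.finrank ℝ E = Fintype.card (ι ⊕ κ)) :
    ∃ b : OrthonormalBasis (ι ⊕ κ) ℝ E, ∀ i, b (.inl i) = v i := by
  have hrange : Orthonormal ℝ ((Set.range Sum.inl).domRestrict (Sum.elim v (0 : κ → E))) := by
    convert hv.comp _ (Equiv.ofInjective _ (Sum.inl_injective (β := κ))).symm.injective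
    ext ⟨_, i, rfl⟩
    simp
  obtain ⟨b, hb⟩ := hrange.exists_orthonormalBasis_extension_of_card_eq hE
  exact ⟨b, fun i ↦ hb _ ⟨i, rfl⟩⟩

end OrthonormalBasis

section UniformSphere

variable {E F : Type*} [NormedAddCommGroup E] [InnerProductSpace ℝ E] [FiniteDimensional ℝ E]
  [MeasurableSpace E] [BorelSpace E] [NormedAddCommGroup F] [InnerProductSpace ℝ F]
  [FiniteDimensional ℝ F] [MeasurableSpace F] [BorelSpace F]

variable (E) in
/-- The uniform law on the unit sphere of `E`, as the law of a normalized standard Gaussian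
vector. It is a Dirac mass at `0` if `E` is trivial. -/
def uniformSphere : Measure E := (stdGaussian E).map fun x ↦ ‖x‖⁻¹ • x

instance : IsProbabilityMeasure (uniformSphere E) :=
  Measure.isProbabilityMeasure_map (by fun_prop)

lemma map_linearIsometryEquiv_uniformSphere (f : E ≃ₗᵢ[ℝ] F) :
    (uniformSphere E).map f = uniformSphere F := by
  rw [uniformSphere, uniformSphere, ← stdGaussian_map f, Measure.map_map (by fun_prop)
    (by fun_prop), Measure.map_map (by fun_prop) (by fun_prop)]
  congr 1 with x
  simp

lemma ae_ne_zero_stdGaussian [Nontrivial E] : ∀ᵐ x ∂stdGaussian E, x ≠ 0 := by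
  obtain ⟨v, hv⟩ := exists_ne (0 : E)
  have hlaw : (stdGaussian E).map (innerSL ℝ v) = gaussianReal 0 (‖v‖ ^ 2).toNNReal := by
    rw [IsGaussian.map_eq_gaussianReal, integral_strongDual_stdGaussian,
      variance_dual_stdGaussian, innerSL_apply_norm]
  have : NullSingletonClass (gaussianReal 0 (‖v‖ ^ 2).toNNReal) :=
    nullSingletonClass_gaussianReal (by simp [hv])
  have hne := Measure.ae_ne (gaussianReal 0 (‖v‖ ^ 2).toNNReal) 0
  rw [← hlaw] at hne
  filter_upwards [ae_of_ae_map (by fun_prop) hne] with x hx h0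
  exact hx (by simp [h0])

lemma ae_norm_eq_one_uniformSphere [Nontrivial E] : ∀ᵐ u ∂uniformSphere E, ‖u‖ = 1 := by
  rw [uniformSphere, ae_map_iff (by fun_prop) (measurableSet_eq_fun (by fun_prop) (by fun_prop))]
  filter_upwards [ae_ne_zero_stdGaussian] with x hx
  rw [norm_smul, norm_inv, norm_norm, inv_mul_cancel₀ (norm_ne_zero_iff.2 hx)]

lemma map_inner_uniformSphere {N : ℕ} (hN : N ≠ 0) (b : OrthonormalBasis (Fin 2 ⊕ Fin N) ℝ E) :
    (uniformSphere E).map (fun u ↦ √(N + 2) • (inner ℝ (b (.inl 0)) u, inner ℝ (b (.inl 1)) u)) =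
      planarProjectionLaw N := by
  have hsplit := ((measurePreserving_finTwoArrow (gaussianReal 0 1)).prod
    (MeasurePreserving.id (Measure.pi fun _ : Fin N ↦ gaussianReal 0 1))).comp
      (measurePreserving_sumPiEquivProdPi fun _ : Fin 2 ⊕ Fin N ↦ gaussianReal 0 1)
  rw [uniformSphere, stdGaussian_eq_map_pi_orthonormalBasis b,
    Measure.map_map (by fun_prop) (by fun_prop), Measure.map_map (by fun_prop) (by fun_prop),
    ← map_rescale_prod_pi_gaussianReal hN, ← hsplit.map_eq,
    Measure.map_map (by fun_prop) hsplit.measurable]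
  congr 1
  funext x
  have hinner (i) : inner ℝ (b i) (∑ j, x j • b j) = x i := b.orthonormal.inner_right_fintype x i
  have hnorm : ‖∑ i, x i • b i‖ =
      √(x (.inl 0) ^ 2 + x (.inl 1) ^ 2 + ∑ j : Fin N, x (.inr j) ^ 2) := by
    rw [← Real.sqrt_sq (norm_nonneg _), ← b.sum_sq_norm_inner_right, Fintype.sum_sum_type,
      Fin.sum_univ_two]
    simp only [hinner, Real.norm_eq_abs, sq_abs]
  simp only [Function.comp_apply, inner_smul_right, hinner, hnorm]
  change _ = (√(N + 2) / √(x (.inl 0) ^ 2 + x (.inl 1) ^ 2 + ∑ j : Fin N, x (.inr j) ^ 2)) •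
    (x (.inl 0), x (.inl 1))
  rw [div_eq_mul_inv, mul_smul]
  rfl

lemma map_inner_pair_uniformSphere {N : ℕ} (hN : N ≠ 0) (hE : Module.finrank ℝ E = N + 2)
    {x y : E} (hx : ‖x‖ = 1) (hy : ‖y‖ = 1) :
    (uniformSphere E).map (fun u ↦ √(N + 2) • (inner ℝ x u, inner ℝ y u)) =
      (planarProjectionLaw N).map
        fun p ↦ (p.1, inner ℝ x y * p.1 + √(1 - inner ℝ x y ^ 2) * p.2) := by
  obtain ⟨e, hxe, hy_eq⟩ := exists_orthonormal_pair_decomposition (by omega) hx hy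
  obtain ⟨b, hb⟩ := exists_orthonormalBasis_inl_eq (κ := Fin N) hxe (by simp [hE, add_comm])
  rw [← map_inner_uniformSphere hN b, Measure.map_map (by fun_prop) (by fun_prop), hb 0, hb 1]
  congr 1
  funext u
  simp only [Function.comp_apply, Prod.smul_mk, smul_eq_mul, cons_val_zero, cons_val_one]
  conv_lhs => rw [hy_eq]
  rw [inner_add_left, real_inner_smul_left, real_inner_smul_left]
  ring_nf

lemma abs_integral_uniformSphere_sub_integral_gaussianReal_le {φ : ℝ → ℝ} {C L : ℝ≥0} {N : ℕ}
    (hN : N ≠ 0) (hE : Module.finrank ℝ E = N + 2) (hφ : ∀ x, |φ x| ≤ C)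
    (hL : LipschitzWith L φ) {x y : E} (hx : ‖x‖ = 1) (hy : ‖y‖ = 1) :
    |∫ u, φ (√(N + 2) * inner ℝ x u) * φ (√(N + 2) * inner ℝ y u) ∂uniformSphere E
        - ∫ p, φ p.1 * φ (inner ℝ x y * p.1 + √(1 - inner ℝ x y ^ 2) * p.2)
            ∂(gaussianReal 0 1).prod (gaussianReal 0 1)| ≤
      C * L * √2 * (5 / 2 / N) := by
  have hφm : Measurable φ := hL.continuous.measurable
  have hρ : inner ℝ x y ^ 2 ≤ 1 := by
    rw [sq_le_one_iff_abs_le_one]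
    simpa [hx, hy] using abs_real_inner_le_norm x y
  have hproj : ∫ u, φ (√(N + 2) * inner ℝ x u) * φ (√(N + 2) * inner ℝ y u) ∂uniformSphere E =
      ∫ p, φ p.1 * φ (inner ℝ x y * p.1 + √(1 - inner ℝ x y ^ 2) * p.2)
        ∂planarProjectionLaw N := by
    calc _ = ∫ p, φ p.1 * φ p.2
          ∂(uniformSphere E).map fun u ↦ √(N + 2) • (inner ℝ x u, inner ℝ y u) := by
          rw [integral_map (by fun_prop) (by fun_prop)]
          rfl
      _ = _ := by
          rw [map_inner_pair_uniformSphere hN hE hx hy, integral_map (by fun_prop) (by fun_prop)]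
  have hsqrt : √(1 / 2) + √(1 / 2) = √2 := by
    rw [one_div, Real.sqrt_inv, ← two_mul, ← div_eq_mul_inv, Real.div_sqrt]
  rw [hproj]
  convert abs_integral_planarProjectionLaw_sub_integral_gaussianReal_le hN hφ hL
    (inner ℝ x y) √(1 - inner ℝ x y ^ 2) using 3
  rw [Real.sq_sqrt (sub_nonneg.2 hρ), add_sub_cancel, hsqrt]

end UniformSphere

/-! ### Rows of Haar orthogonal matrices -/

section HaarMatrix

lemma measurable_matrix_apply {m n : Type*} (i : m) (j : n) :
    Measurable fun M : Matrix m n ℝ ↦ M i j :=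
  (measurable_pi_apply j).comp (measurable_pi_apply (X := fun _ ↦ n → ℝ) i)

lemma measurable_toMatrix {Ω m n : Type*} [MeasurableSpace Ω] {f : Ω → Matrix m n ℝ}
    (hf : ∀ i j, Measurable fun ω ↦ f ω i j) : Measurable f :=
  measurable_pi_iff.2 fun i ↦ measurable_pi_iff.2 (hf i)

lemma measurable_matrix_row {m n : Type*} (i : m) :
    Measurable fun M : Matrix m n ℝ ↦ WithLp.toLp 2 (M.row i) :=
  (WithLp.measurable_toLp 2 _).comp (measurable_pi_apply i)

lemma measurable_matrix_mul_left {l m n : Type*} [Fintype m] (A : Matrix l m ℝ) :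
    Measurable fun M : Matrix m n ℝ ↦ A * M :=
  measurable_toMatrix fun i j ↦ Finset.measurable_sum _ fun a _ ↦
    (measurable_matrix_apply a j).const_mul (A i a)

lemma measurable_matrix_mulVec {m n : Type*} [Fintype n] (v : n → ℝ) (i : m) :
    Measurable fun M : Matrix m n ℝ ↦ (M *ᵥ v) i :=
  Finset.measurable_sum _ fun j _ ↦ (measurable_matrix_apply i j).mul_const (v j)

variable {ι : Type*} [Fintype ι]

lemma measurable_vecMul {n : Type*} : Measurable fun p : EuclideanSpace ℝ ι × Matrix ι n ℝ ↦
    (WithLp.toLp 2 (p.1.ofLp ᵥ* p.2) : PiLp 2 fun _ : n ↦ ℝ) := by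
  refine (WithLp.measurable_toLp 2 _).comp (measurable_pi_iff.2 fun j ↦
    Finset.measurable_sum _ fun i _ ↦ Measurable.mul (by fun_prop) ?_)
  exact (measurable_matrix_apply i j).comp measurable_snd

variable [DecidableEq ι]

lemma exists_orthogonal_row_eq (i : ι) {u : EuclideanSpace ℝ ι} (hu : ‖u‖ = 1) :
    ∃ Q : Matrix ι ι ℝ, Qᵀ * Q = 1 ∧ Q.row i = u.ofLp := by
  have hsingle : Orthonormal ℝ (({i} : Set ι).domRestrict fun _ ↦ u) :=
    ⟨fun _ ↦ hu, fun a b hab ↦ (hab (Subsingleton.elim a b)).elim⟩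
  obtain ⟨b, hb⟩ := hsingle.exists_orthonormalBasis_extension_of_card_eq (by simp)
  refine ⟨((EuclideanSpace.basisFun ι ℝ).toBasis.toMatrix b)ᵀ, ?_, ?_⟩
  · exact (EuclideanSpace.basisFun ι ℝ).toMatrix_orthonormalBasis_self_mul_conjTranspose b
  · ext j
    simp [Module.Basis.toMatrix_apply, hb i rfl]

lemma map_vecMul_uniformSphere {M : Matrix ι ι ℝ} (hM : Mᵀ * M = 1) :
    (uniformSphere (EuclideanSpace ℝ ι)).map (fun u ↦ WithLp.toLp 2 (u.ofLp ᵥ* M)) =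
      uniformSphere (EuclideanSpace ℝ ι) := by
  have hMt : Mᵀ ∈ orthogonalGroup ι ℝ := by
    rw [mem_orthogonalGroup_iff]
    simpa using hM
  convert map_linearIsometryEquiv_uniformSphere (Unitary.linearIsometryEquiv
    ⟨_, Unitary.map_mem (toEuclideanCLM (n := ι) (𝕜 := ℝ)) hMt⟩) using 2
  funext u
  simp only [← mulVec_transpose]
  rfl

variable {n : ℕ} {μ : Measure (Matrix (Fin n) (Fin n) ℝ)}

lemma IsHaarO.lintegral_row (hμ : IsHaarO n μ) (i : Fin n) {f : EuclideanSpace ℝ (Fin n) → ℝ≥0∞}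
    (hf : Measurable f) {u : EuclideanSpace ℝ (Fin n)} (hu : ‖u‖ = 1) :
    ∫⁻ M, f (WithLp.toLp 2 (M.row i)) ∂μ = ∫⁻ M, f (WithLp.toLp 2 (u.ofLp ᵥ* M)) ∂μ := by
  obtain ⟨Q, hQ, hQu⟩ := exists_orthogonal_row_eq i hu
  calc ∫⁻ M, f (WithLp.toLp 2 (M.row i)) ∂μ
      = ∫⁻ M, f (WithLp.toLp 2 (M.row i)) ∂μ.map (Q * ·) := by rw [hμ.2.2 Q hQ]
    _ = ∫⁻ M, f (WithLp.toLp 2 ((Q * M).row i)) ∂μ :=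
      lintegral_map (hf.comp (measurable_matrix_row i)) (measurable_matrix_mul_left Q)
    _ = ∫⁻ M, f (WithLp.toLp 2 (u.ofLp ᵥ* M)) ∂μ := by
      simp only [row, mul_apply_eq_vecMul, ← hQu]

-- The law of `u ᵥ* M` under `μ` is the same for all unit vectors `u`, so it may be averaged over
-- the sphere; for fixed `M` it is then `u` that is uniform, and `M` acts as an isometry.
lemma IsHaarO.map_row (hμ : IsHaarO n μ) (i : Fin n) :
    μ.map (fun M ↦ WithLp.toLp 2 (M.row i)) = uniformSphere (EuclideanSpace ℝ (Fin n)) := by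
  have : IsProbabilityMeasure μ := hμ.1
  have : Nonempty (Fin n) := ⟨i⟩
  set σ := uniformSphere (EuclideanSpace ℝ (Fin n))
  refine Measure.ext_of_lintegral _ fun (f : EuclideanSpace ℝ (Fin n) → ℝ≥0∞) hf ↦ ?_
  calc ∫⁻ M, f M ∂μ.map (fun M ↦ WithLp.toLp 2 (M.row i))
      = ∫⁻ M, f (WithLp.toLp 2 (M.row i)) ∂μ := lintegral_map hf (measurable_matrix_row i)
    _ = ∫⁻ u, ∫⁻ M, f (WithLp.toLp 2 (WithLp.ofLp u ᵥ* M)) ∂μ ∂σ := by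
        rw [← lintegral_congr_ae (ae_norm_eq_one_uniformSphere.mono fun u hu ↦
          hμ.lintegral_row i hf hu),
          lintegral_const, measure_univ, mul_one]
    _ = ∫⁻ M, ∫⁻ u, f (WithLp.toLp 2 (WithLp.ofLp u ᵥ* M)) ∂σ ∂μ :=
        lintegral_lintegral_swap
          (f := fun (u : EuclideanSpace ℝ (Fin n)) M ↦ f (WithLp.toLp 2 (u.ofLp ᵥ* M)))
          (hf.comp measurable_vecMul).aemeasurable
    _ = ∫⁻ _, ∫⁻ u, f u ∂σ ∂μ := by
        refine lintegral_congr_ae (hμ.2.1.mono fun M hM ↦ ?_)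
        have hvecMul : Measurable fun u : EuclideanSpace ℝ (Fin n) ↦ WithLp.toLp 2 (u.ofLp ᵥ* M) :=
          measurable_vecMul.comp measurable_prodMk_right
        beta_reduce
        rw [← lintegral_map hf hvecMul, map_vecMul_uniformSphere hM]
    _ = ∫⁻ u, f u ∂σ := by rw [lintegral_const, measure_univ, mul_one]

end HaarMatrix

section HaarKernel

variable {m k n : ℕ} (hmn : m ≤ n) (hkn : k ≤ n)

/-- The vector `z / √k`, padded with zeros to a vector of `ℝⁿ`. It is the vector on which the
orthogonal matrix underlying an SUO matrix acts, and it is a unit vector if `‖z‖² = k`. -/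
def normalizedPad (z : Fin k → ℝ) : EuclideanSpace ℝ (Fin n) :=
  WithLp.toLp 2 (Function.extend (Fin.castLE hkn) (fun j ↦ z j / √k) 0)

lemma inner_toLp_normalizedPad (a : Fin n → ℝ) (z : Fin k → ℝ) :
    inner ℝ (normalizedPad hkn z) (WithLp.toLp 2 a) =
      (∑ j, a (Fin.castLE hkn j) * z j) / √k := by
  have hinj := Fin.castLE_injective hkn
  rw [Finset.sum_div, EuclideanSpace.inner_eq_star_dotProduct]
  refine (Fintype.sum_of_injective _ hinj _ _ (fun i hi ↦ ?_) fun j ↦ ?_).symm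
  · simp [normalizedPad, Function.extend_apply' _ _ _ hi]
  · simp [normalizedPad, hinj.extend_apply, mul_div_assoc]

lemma inner_normalizedPad (z z' : Fin k → ℝ) :
    inner ℝ (normalizedPad hkn z) (normalizedPad hkn z') = (z ⬝ᵥ z') / k := by
  rw [normalizedPad.eq_1 hkn z', inner_toLp_normalizedPad, dotProduct_comm z]
  simp only [(Fin.castLE_injective hkn).extend_apply, div_mul_eq_mul_div]
  rw [← Finset.sum_div, div_div, Real.mul_self_sqrt k.cast_nonneg]
  rfl

lemma norm_normalizedPad (hk : 0 < k) {z : Fin k → ℝ} (hz : z ⬝ᵥ z = k) :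
    ‖normalizedPad hkn z‖ = 1 := by
  rw [norm_eq_sqrt_real_inner, inner_normalizedPad, hz, div_self (by positivity), Real.sqrt_one]

lemma suoOfHaar_mulVec (M : Matrix (Fin n) (Fin n) ℝ) (z : Fin k → ℝ) (i : Fin m) :
    (suoOfHaar hmn hkn M *ᵥ z) i =
      √n * inner ℝ (normalizedPad hkn z) (WithLp.toLp 2 (M.row (Fin.castLE hmn i))) := by
  rw [inner_toLp_normalizedPad, suoOfHaar, smul_mulVec, Pi.smul_apply, smul_eq_mul,
    Real.sqrt_div n.cast_nonneg, div_mul_eq_mul_div, mul_div_assoc]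
  rfl

lemma measurable_suoOfHaar : Measurable (suoOfHaar hmn hkn) :=
  measurable_toMatrix fun i j ↦
    (measurable_matrix_apply (Fin.castLE hmn i) (Fin.castLE hkn j)).const_mul _

lemma measurable_kernelF {φ : ℝ → ℝ} (hφ : Measurable φ) (z z' : Fin k → ℝ) :
    Measurable fun W : Matrix (Fin m) (Fin k) ℝ ↦ kernelF φ W z z' :=
  (Finset.measurable_sum _ fun i _ ↦ (hφ.comp (measurable_matrix_mulVec z i)).mul
    (hφ.comp (measurable_matrix_mulVec z' i))).div_const _

lemma integral_kernelF_map_suoOfHaar (hm : 0 < m) {μ : Measure (Matrix (Fin n) (Fin n) ℝ)}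
    (hμ : IsHaarO n μ) {φ : ℝ → ℝ} {C : ℝ≥0} (hφ : ∀ x, |φ x| ≤ C) (hφm : Measurable φ)
    (z z' : Fin k → ℝ) :
    ∫ W, kernelF φ W z z' ∂μ.map (suoOfHaar hmn hkn) =
      ∫ u, φ (√n * inner ℝ (normalizedPad hkn z) u) * φ (√n * inner ℝ (normalizedPad hkn z') u)
        ∂uniformSphere (EuclideanSpace ℝ (Fin n)) := by
  have : IsProbabilityMeasure μ := hμ.1
  set f : EuclideanSpace ℝ (Fin n) → ℝ := fun u ↦
    φ (√n * inner ℝ (normalizedPad hkn z) u) * φ (√n * inner ℝ (normalizedPad hkn z') u)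
  have hkernel (M : Matrix (Fin n) (Fin n) ℝ) : kernelF φ (suoOfHaar hmn hkn M) z z' =
      (∑ i : Fin m, f (WithLp.toLp 2 (M.row (Fin.castLE hmn i)))) / m := by
    simp only [kernelF, suoOfHaar_mulVec, f]
  have hrow (i : Fin n) : ∫ M, f (WithLp.toLp 2 (M.row i)) ∂μ =
      ∫ u, f u ∂uniformSphere (EuclideanSpace ℝ (Fin n)) := by
    rw [← hμ.map_row i, integral_map (measurable_matrix_row i).aemeasurable (by fun_prop)]
  have hint (i : Fin n) : Integrable (fun M ↦ f (WithLp.toLp 2 (M.row i))) μ :=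
    integrable_mul_of_abs_le hφ hφm
      ((by fun_prop : Measurable fun u ↦ √n * inner ℝ (normalizedPad hkn z) u).comp
        (measurable_matrix_row i))
      ((by fun_prop : Measurable fun u ↦ √n * inner ℝ (normalizedPad hkn z') u).comp
        (measurable_matrix_row i))
  rw [integral_map (measurable_suoOfHaar hmn hkn).aemeasurable
    (measurable_kernelF hφm z z').aestronglyMeasurable]
  simp only [hkernel]
  rw [integral_div, integral_finsetSum _ fun i _ ↦ hint (Fin.castLE hmn i)]
  simp only [hrow, Finset.sum_const, Finset.card_univ, Fintype.card_fin, nsmul_eq_mul]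
  exact mul_div_cancel_left₀ _ (by positivity)

lemma approxKernel_covMat (hk : 0 < k) (φ : ℝ → ℝ) {z z' : Fin k → ℝ} (hz : z ⬝ᵥ z = k)
    (hz' : z' ⬝ᵥ z' = k) :
    approxKernel φ (covMat z z') =
      ∫ p, φ p.1 * φ ((z ⬝ᵥ z') / k * p.1 + √(1 - ((z ⬝ᵥ z') / k) ^ 2) * p.2)
        ∂(gaussianReal 0 1).prod (gaussianReal 0 1) := by
  have hk' : (k : ℝ) ≠ 0 := by positivity
  have h00 : covMat z z' 0 0 = 1 := by simp [covMat, hz, hk']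
  have h11 : covMat z z' 1 1 = 1 := by simp [covMat, hz', hk']
  have h10 : covMat z z' 1 0 = (z ⬝ᵥ z') / k := by
    simp [covMat, dotProduct_comm z', div_eq_inv_mul]
  simp only [approxKernel, h00, h11, h10, Real.sqrt_one, one_mul, div_one]

end HaarKernel

theorem suo_mean_kernel_approx_general {m k n : ℕ} (hm : 0 < m) (hk : 0 < k) (hn : 2 ≤ n)
    (hmn : m ≤ n) (hkn : k ≤ n) {μ : Measure (Matrix (Fin n) (Fin n) ℝ)} (hμ : IsHaarO n μ)
    {φ : ℝ → ℝ} {C : ℝ≥0} (hφ : ∀ x, |φ x| ≤ C) (hφ' : LipschitzWith C φ)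
    {z z' : Fin k → ℝ} (hz : z ⬝ᵥ z = k) (hz' : z' ⬝ᵥ z' = k) :
    |(∫ W, kernelF φ W z z' ∂μ.map (suoOfHaar hmn hkn)) - approxKernel φ (covMat z z')| ≤
      4 * √2 * C ^ 2 / (n - 1) := by
  rw [integral_kernelF_map_suoOfHaar hmn hkn hm hμ hφ hφ'.continuous.measurable,
    approxKernel_covMat hk φ hz hz']
  obtain hn3 | hn3 := le_or_gt n 3
  · have : Nonempty (Fin n) := ⟨0, by omega⟩
    have hn2' : (2 : ℝ) ≤ n := mod_cast hn
    have hn3' : (n : ℝ) ≤ 3 := mod_cast hn3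
    have hden : (0 : ℝ) < n - 1 := by linarith
    calc _ ≤ (C : ℝ) ^ 2 + C ^ 2 := (abs_sub _ _).trans <|
          add_le_add (abs_integral_mul_le_sq hφ _ _) (abs_integral_mul_le_sq hφ _ _)
      _ = 2 * 1 * C ^ 2 := by ring
      _ ≤ 4 / (n - 1 : ℝ) * √2 * C ^ 2 := by
          gcongr
          · rw [le_div_iff₀ hden]
            linarith
          · exact Real.one_le_sqrt.2 one_le_two
      _ = 4 * √2 * C ^ 2 / (n - 1) := by ring
  · obtain ⟨N, rfl⟩ : ∃ N, n = N + 2 := ⟨n - 2, by omega⟩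
    have hN : (2 : ℝ) ≤ N := mod_cast (by omega : 2 ≤ N)
    rw [← inner_normalizedPad hkn, Nat.cast_add, Nat.cast_ofNat]
    calc _ ≤ (C : ℝ) * C * √2 * (5 / 2 / N) :=
          abs_integral_uniformSphere_sub_integral_gaussianReal_le (by omega) (by simp) hφ hφ'
            (norm_normalizedPad hkn hk hz) (norm_normalizedPad hkn hk hz')
      _ = C ^ 2 * √2 * (5 / 2 / N) := by ring
      _ ≤ C ^ 2 * √2 * (4 / (N + 2 - 1)) := by
          gcongr ?_ * ?_
          rw [div_div, div_le_div_iff₀ (by positivity) (by linarith)]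
          linarith
      _ = 4 * √2 * C ^ 2 / (N + 2 - 1) := by ring

end

/-- **Proposition.** For SUO-distributed `W`, `φ` with `‖φ‖_∞, ‖φ'‖_∞ ≤ C`, and inputs
with `‖z‖² = ‖z'‖² = k`, if `n = max k m ≥ 2` then
`|E[κ_f(z,z')] - κ̃_f(Σ_{z,z'})| ≤ 4√2 √m C²/(n-1)`. -/
theorem suo_mean_kernel_approx (m k : ℕ) (hm : 0 < m) (hk : 0 < k)
    (hn : 2 ≤ max k m)
    (ν : Measure (Matrix (Fin m) (Fin k) ℝ)) (hν : IsSUO m k ν)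
    (φ : ℝ → ℝ) (C : ℝ) (hφdiff : Differentiable ℝ φ)
    (hφ : ∀ x, |φ x| ≤ C) (hφ' : ∀ x, |deriv φ x| ≤ C)
    (z z' : Fin k → ℝ) (hz : z ⬝ᵥ z = (k : ℝ)) (hz' : z' ⬝ᵥ z' = (k : ℝ)) :
    |(∫ W, kernelF φ W z z' ∂ν) - approxKernel φ (covMat z z')| ≤
      4 * Real.sqrt 2 * Real.sqrt m * C ^ 2 / (((max k m : ℕ) : ℝ) - 1) := by
  obtain ⟨μ, hμ, rfl⟩ := hν
  lift C to ℝ≥0 using (abs_nonneg _).trans (hφ 0)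
  have hLip : LipschitzWith C φ := lipschitzWith_of_nnnorm_deriv_le hφdiff hφ'
  refine (suo_mean_kernel_approx_general hm hk hn _ _ hμ hφ hLip hz hz').trans ?_
  have hden : (0 : ℝ) ≤ (max k m : ℕ) - 1 := sub_nonneg.2 (mod_cast one_le_two.trans hn)
  gcongr ?_ * _ / _
  exact le_mul_of_one_le_right (by positivity) (Real.one_le_sqrt.2 (mod_cast hm))
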